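/- The set of fixed points in T = ℍ/𝔞 of the map j' = (j;α) : x ↦ j·x + [(1+i)/2] is exactly the set of 2-torsion points {0011, 0101, 1001, 1111}, and the set of fixed points of k' = (k;α) : x ↦ k·x + [(1+i)/2] is exactly {0001, 1011, 0111, 1101}; in particular each of these maps fixes exactly four points, all of which are 2-torsion. -/

import Mathlib

/- STATEMENT 7: The fixed points in T = ℍ/𝔞 of j' = (j;α) : x ↦ j·x + [(1+i)/2] are
exactly {0011, 0101, 1001, 1111}, and the fixed points of k' = (k;α) : x ↦ k·x + [(1+i)/2]
are exactly {0001, 1011, 0111, 1101}; in particular each of these maps fixes exactly four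
points, all of which are 2-torsion.  (Here abcd = [a/2 + (b/2)i + (c/2)j + (d/2)t].) -/

open scoped Quaternion

noncomputable def qi : ℍ[ℝ] := ⟨0, 1, 0, 0⟩
noncomputable def qj : ℍ[ℝ] := ⟨0, 0, 1, 0⟩
noncomputable def qk : ℍ[ℝ] := ⟨0, 0, 0, 1⟩
noncomputable def qt : ℍ[ℝ] := (1 + qi + qj + qk) / 2
noncomputable def qα : ℍ[ℝ] := (1 + qi) / 2

/-- The Hurwitz order `𝔞 = ℤ·1 + ℤ·i + ℤ·j + ℤ·t` as an additive subgroup of `ℍ`. -/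
noncomputable def hurwitz : AddSubgroup ℍ[ℝ] := AddSubgroup.closure {1, qi, qj, qt}

/-- The real torus `T = ℍ/𝔞`. -/
noncomputable abbrev T := ℍ[ℝ] ⧸ hurwitz

/-- The class map `ℍ → T = ℍ/𝔞`. -/
noncomputable def π : ℍ[ℝ] → T := QuotientAddGroup.mk

/-! Coordinates of the basic quaternions. -/
@[simp] lemma qi_re : qi.re = 0 := rfl
@[simp] lemma qi_imI : qi.imI = 1 := rfl
@[simp] lemma qi_imJ : qi.imJ = 0 := rfl
@[simp] lemma qi_imK : qi.imK = 0 := rfl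
@[simp] lemma qj_re : qj.re = 0 := rfl
@[simp] lemma qj_imI : qj.imI = 0 := rfl
@[simp] lemma qj_imJ : qj.imJ = 1 := rfl
@[simp] lemma qj_imK : qj.imK = 0 := rfl
@[simp] lemma qk_re : qk.re = 0 := rfl
@[simp] lemma qk_imI : qk.imI = 0 := rfl
@[simp] lemma qk_imJ : qk.imJ = 0 := rfl
@[simp] lemma qk_imK : qk.imK = 1 := rfl

lemma half_eq (z : ℍ[ℝ]) : z / 2 = (2⁻¹ : ℝ) • z := by
  have h2 : (2 : ℍ[ℝ]) ≠ 0 := by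
    intro h
    have h' : (1 : ℍ[ℝ]) + 1 = 0 := by rw [one_add_one_eq_two]; exact h
    have := congrArg (fun w : ℍ[ℝ] => w.re) h'
    simp only [Quaternion.re_add, Quaternion.re_one, Quaternion.re_zero] at this
    linarith
  rw [div_eq_iff h2, mul_two, ← add_smul]; norm_num

@[simp] lemma qt_re : qt.re = 1 / 2 := by
  rw [qt, half_eq]; simp
@[simp] lemma qt_imI : qt.imI = 1 / 2 := by
  rw [qt, half_eq]; simp
@[simp] lemma qt_imJ : qt.imJ = 1 / 2 := by
  rw [qt, half_eq]; simp
@[simp] lemma qt_imK : qt.imK = 1 / 2 := by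
  rw [qt, half_eq]; simp

/-- Membership in the Hurwitz order in coordinates. -/
lemma mem_hurwitz_iff (p : ℍ[ℝ]) : p ∈ hurwitz ↔ ∃ m n l q : ℤ,
    p.re = m + q / 2 ∧ p.imI = n + q / 2 ∧ p.imJ = l + q / 2 ∧ p.imK = q / 2 := by
  constructor
  · intro h
    induction h using AddSubgroup.closure_induction with
    | mem x hx =>
      rcases hx with rfl | rfl | rfl | rfl
      · exact ⟨1, 0, 0, 0, by simp⟩
      · exact ⟨0, 1, 0, 0, by simp⟩
      · exact ⟨0, 0, 1, 0, by simp⟩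
      · exact ⟨0, 0, 0, 1, by simp⟩
    | zero => exact ⟨0, 0, 0, 0, by simp⟩
    | add x y _ _ hx hy =>
      obtain ⟨m, n, l, q, h1, h2, h3, h4⟩ := hx
      obtain ⟨m', n', l', q', h1', h2', h3', h4'⟩ := hy
      refine ⟨m + m', n + n', l + l', q + q', ?_, ?_, ?_, ?_⟩ <;>
        push_cast <;> simp only [Quaternion.re_add, Quaternion.imI_add, Quaternion.imJ_add,
          Quaternion.imK_add] <;> linarith
    | neg x _ hx =>
      obtain ⟨m, n, l, q, h1, h2, h3, h4⟩ := hx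
      refine ⟨-m, -n, -l, -q, ?_, ?_, ?_, ?_⟩ <;>
        push_cast <;> simp only [Quaternion.re_neg, Quaternion.imI_neg, Quaternion.imJ_neg,
          Quaternion.imK_neg] <;> linarith
  · rintro ⟨m, n, l, q, h1, h2, h3, h4⟩
    have e : p = m • (1 : ℍ[ℝ]) + n • qi + l • qj + q • qt := by
      ext <;> simp [h1, h2, h3, h4] <;> ring
    rw [e]
    have hs : ∀ x ∈ ({1, qi, qj, qt} : Set ℍ[ℝ]), x ∈ hurwitz := fun x hx =>
      AddSubgroup.subset_closure hx
    refine add_mem (add_mem (add_mem ?_ ?_) ?_) ?_ <;>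
      exact zsmul_mem (hs _ (by simp)) _

lemma π_eq_iff (x y : ℍ[ℝ]) : π x = π y ↔ ∃ m n l q : ℤ,
    x.re - y.re = m + q / 2 ∧ x.imI - y.imI = n + q / 2 ∧
    x.imJ - y.imJ = l + q / 2 ∧ x.imK - y.imK = q / 2 := by
  rw [π, eq_comm, QuotientAddGroup.eq, mem_hurwitz_iff, neg_add_eq_sub]
  simp only [Quaternion.re_sub, Quaternion.imI_sub, Quaternion.imJ_sub, Quaternion.imK_sub]

/-- The point `a/2 + (b/2) i + (c/2) j + (d/2) t` in coordinates. -/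
noncomputable def pt (a b c d : ℤ) : ℍ[ℝ] :=
  ⟨a / 2 + d / 4, b / 2 + d / 4, c / 2 + d / 4, d / 4⟩

@[simp] lemma pt_re (a b c d : ℤ) : (pt a b c d).re = a / 2 + d / 4 := rfl
@[simp] lemma pt_imI (a b c d : ℤ) : (pt a b c d).imI = b / 2 + d / 4 := rfl
@[simp] lemma pt_imJ (a b c d : ℤ) : (pt a b c d).imJ = c / 2 + d / 4 := rfl
@[simp] lemma pt_imK (a b c d : ℤ) : (pt a b c d).imK = d / 4 := rfl

lemma pt_eq (a b c d : ℤ) : ((a : ℍ[ℝ]) + b * qi + c * qj + d * qt) / 2 = pt a b c d := by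
  have hz (n : ℤ) (z : ℍ[ℝ]) : (n : ℍ[ℝ]) * z = (n : ℝ) • z := by
    rw [← zsmul_eq_mul, Int.cast_smul_eq_zsmul]
  rw [half_eq, hz, hz, hz]
  ext <;> simp <;> ring

lemma π_pt_eq_iff (a b c d a' b' c' d' : ℤ) : π (pt a b c d) = π (pt a' b' c' d') ↔
    2 ∣ a - a' ∧ 2 ∣ b - b' ∧ 2 ∣ c - c' ∧ 2 ∣ d - d' := by
  rw [π_eq_iff]
  constructor
  · rintro ⟨m, n, l, q, h1, h2, h3, h4⟩
    simp only [pt_re, pt_imI, pt_imJ, pt_imK] at h1 h2 h3 h4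
    refine ⟨⟨m, ?_⟩, ⟨n, ?_⟩, ⟨l, ?_⟩, ⟨q, ?_⟩⟩ <;> rify <;> linarith
  · rintro ⟨⟨m, h1⟩, ⟨n, h2⟩, ⟨l, h3⟩, ⟨q, h4⟩⟩
    rify at h1 h2 h3 h4
    refine ⟨m, n, l, q, ?_, ?_, ?_, ?_⟩ <;> simp only [pt_re, pt_imI, pt_imJ, pt_imK] <;> linarith

lemma two_tors (a b c d : ℤ) : π (pt a b c d) + π (pt a b c d) = 0 := by
  have h : π (pt a b c d) + π (pt a b c d) = π (pt (2 * a) (2 * b) (2 * c) (2 * d)) := by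
    change π (pt a b c d + pt a b c d) = _
    congr 1
    ext <;> simp <;> ring
  have h0 : (0 : T) = π (pt 0 0 0 0) := by
    change π 0 = _
    congr 1
    ext <;> simp
  rw [h, h0, π_pt_eq_iff]
  simp

lemma alpha_eq : qα = pt 1 1 0 0 := by
  rw [← pt_eq, qα]; simp

lemma j_fixed_iff (x : ℍ[ℝ]) : π (qj * x + qα) = π x ↔
    π x = π (pt 0 0 1 1) ∨ π x = π (pt 0 1 0 1) ∨ π x = π (pt 1 0 0 1) ∨
      π x = π (pt 1 1 1 1) := by
  have key : π (qj * x + qα) = π x ↔ ∃ m n l q : ℤ,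
      -x.imJ - x.re + 1 / 2 = m + q / 2 ∧ x.imK - x.imI + 1 / 2 = n + q / 2 ∧
      x.re - x.imJ = l + q / 2 ∧ -x.imI - x.imK = q / 2 := by
    rw [π_eq_iff, alpha_eq]
    simp [ add_sub_right_comm]
  rw [key]
  simp only [π_eq_iff]
  constructor
  · rintro ⟨m, n, l, q, h1, h2, h3, h4⟩
    obtain ⟨u, hu⟩ := Int.even_or_odd' (l - m - n)
    obtain ⟨v, hv⟩ := Int.even_or_odd' q
    rcases hu with hu | hu <;> rcases hv with hv | hv <;> rify at hu hv
    · refine Or.inr (Or.inr (Or.inr ⟨u, -n - v, -m - n - u - v, n - 1, ?_⟩))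
      simp only [pt_re, pt_imI, pt_imJ, pt_imK]; push_cast; refine ⟨?_, ?_, ?_, ?_⟩ <;> linarith
    · refine Or.inr (Or.inr (Or.inl ⟨u, -n - v, -m - n - u - v, n - 1, ?_⟩))
      simp only [pt_re, pt_imI, pt_imJ, pt_imK]; push_cast; refine ⟨?_, ?_, ?_, ?_⟩ <;> linarith
    · refine Or.inr (Or.inl ⟨u + 1, -n - v, -m - n - u - v, n - 1, ?_⟩)
      simp only [pt_re, pt_imI, pt_imJ, pt_imK]; push_cast; refine ⟨?_, ?_, ?_, ?_⟩ <;> linarith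
    · refine Or.inl ⟨u + 1, -n - v, -m - n - u - v - 1, n - 1, ?_⟩
      simp only [pt_re, pt_imI, pt_imJ, pt_imK]; push_cast; refine ⟨?_, ?_, ?_, ?_⟩ <;> linarith
  · simp only [pt_re, pt_imI, pt_imJ, pt_imK]
    rintro (⟨m, n, l, q, h1, h2, h3, h4⟩ | ⟨m, n, l, q, h1, h2, h3, h4⟩ |
      ⟨m, n, l, q, h1, h2, h3, h4⟩ | ⟨m, n, l, q, h1, h2, h3, h4⟩) <;> push_cast at h1 h2 h3 h4
    · refine ⟨-l - m + n + 0, q + 1, m - l + n + q + 0, -2 * n - 2 * q + (-1), ?_⟩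
      push_cast; refine ⟨?_, ?_, ?_, ?_⟩ <;> linarith
    · refine ⟨-l - m + n + 1, q + 1, m - l + n + q + 1, -2 * n - 2 * q + (-2), ?_⟩
      push_cast; refine ⟨?_, ?_, ?_, ?_⟩ <;> linarith
    · refine ⟨-l - m + n + 0, q + 1, m - l + n + q + 1, -2 * n - 2 * q + (-1), ?_⟩
      push_cast; refine ⟨?_, ?_, ?_, ?_⟩ <;> linarith
    · refine ⟨-l - m + n + 0, q + 1, m - l + n + q + 1, -2 * n - 2 * q + (-2), ?_⟩
      push_cast; refine ⟨?_, ?_, ?_, ?_⟩ <;> linarith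

lemma k_fixed_iff (x : ℍ[ℝ]) : π (qk * x + qα) = π x ↔
    π x = π (pt 0 0 0 1) ∨ π x = π (pt 1 0 1 1) ∨ π x = π (pt 0 1 1 1) ∨
      π x = π (pt 1 1 0 1) := by
  have key : π (qk * x + qα) = π x ↔ ∃ m n l q : ℤ,
      -x.imK - x.re + 1 / 2 = m + q / 2 ∧ -x.imJ - x.imI + 1 / 2 = n + q / 2 ∧
      x.imI - x.imJ = l + q / 2 ∧ x.re - x.imK = q / 2 := by
    rw [π_eq_iff, alpha_eq]
    simp [ add_sub_right_comm]
  rw [key]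
  simp only [π_eq_iff]
  constructor
  · rintro ⟨m, n, l, q, h1, h2, h3, h4⟩
    obtain ⟨u, hu⟩ := Int.even_or_odd' (l - n + m)
    obtain ⟨v, hv⟩ := Int.even_or_odd' q
    rcases hu with hu | hu <;> rcases hv with hv | hv <;> rify at hu hv
    · refine Or.inl ⟨v, u + v, m - n - u, -m - 2 * v, ?_⟩
      simp only [pt_re, pt_imI, pt_imJ, pt_imK]; push_cast; refine ⟨?_, ?_, ?_, ?_⟩ <;> linarith
    · refine Or.inr (Or.inr (Or.inr ⟨v, u + v, m - n - u, -m - 2 * v - 1, ?_⟩))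
      simp only [pt_re, pt_imI, pt_imJ, pt_imK]; push_cast; refine ⟨?_, ?_, ?_, ?_⟩ <;> linarith
    · refine Or.inr (Or.inr (Or.inl ⟨v, u + v, m - n - u - 1, -m - 2 * v, ?_⟩))
      simp only [pt_re, pt_imI, pt_imJ, pt_imK]; push_cast; refine ⟨?_, ?_, ?_, ?_⟩ <;> linarith
    · refine Or.inr (Or.inl ⟨v, u + v + 1, m - n - u - 1, -m - 2 * v - 1, ?_⟩)
      simp only [pt_re, pt_imI, pt_imJ, pt_imK]; push_cast; refine ⟨?_, ?_, ?_, ?_⟩ <;> linarith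
  · simp only [pt_re, pt_imI, pt_imJ, pt_imK]
    rintro (⟨m, n, l, q, h1, h2, h3, h4⟩ | ⟨m, n, l, q, h1, h2, h3, h4⟩ |
      ⟨m, n, l, q, h1, h2, h3, h4⟩ | ⟨m, n, l, q, h1, h2, h3, h4⟩) <;> push_cast at h1 h2 h3 h4
    · refine ⟨-2 * m - q + 0, -l - n - q - m + 0, n - l - m + 0, 2 * m + 0, ?_⟩
      push_cast; refine ⟨?_, ?_, ?_, ?_⟩ <;> linarith
    · refine ⟨-2 * m - q + (-1), -l - n - q - m + (-1), n - l - m + (-1), 2 * m + 1, ?_⟩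
      push_cast; refine ⟨?_, ?_, ?_, ?_⟩ <;> linarith
    · refine ⟨-2 * m - q + 0, -l - n - q - m + (-1), n - l - m + 0, 2 * m + 0, ?_⟩
      push_cast; refine ⟨?_, ?_, ?_, ?_⟩ <;> linarith
    · refine ⟨-2 * m - q + (-1), -l - n - q - m + (-1), n - l - m + 0, 2 * m + 1, ?_⟩
      push_cast; refine ⟨?_, ?_, ?_, ?_⟩ <;> linarith

theorem fixed_points_of_j'_and_k'
    (fj fk : T → T)
    (hfj : ∀ x : ℍ[ℝ], fj (π x) = π (qj * x + qα))
    (hfk : ∀ x : ℍ[ℝ], fk (π x) = π (qk * x + qα)) :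
    ({x : T | fj x = x} =
      ({π ((qj + qt) / 2), π ((qi + qt) / 2), π ((1 + qt) / 2),
        π ((1 + qi + qj + qt) / 2)} : Set T)) ∧
    ({x : T | fk x = x} =
      ({π (qt / 2), π ((1 + qj + qt) / 2), π ((qi + qj + qt) / 2),
        π ((1 + qi + qt) / 2)} : Set T)) ∧
    Set.ncard {x : T | fj x = x} = 4 ∧
    Set.ncard {x : T | fk x = x} = 4 ∧
    (∀ x : T, (fj x = x ∨ fk x = x) → x + x = 0) := by
  have p1 : (qj + qt) / 2 = pt 0 0 1 1 := by rw [← pt_eq]; simp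
  have p2 : (qi + qt) / 2 = pt 0 1 0 1 := by rw [← pt_eq]; simp
  have p3 : (1 + qt) / 2 = pt 1 0 0 1 := by rw [← pt_eq]; simp
  have p4 : (1 + qi + qj + qt) / 2 = pt 1 1 1 1 := by rw [← pt_eq]; simp
  have p5 : qt / 2 = pt 0 0 0 1 := by rw [← pt_eq]; simp
  have p6 : (1 + qj + qt) / 2 = pt 1 0 1 1 := by rw [← pt_eq]; simp
  have p7 : (qi + qj + qt) / 2 = pt 0 1 1 1 := by rw [← pt_eq]; simp
  have p8 : (1 + qi + qt) / 2 = pt 1 1 0 1 := by rw [← pt_eq]; simp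
  rw [p1, p2, p3, p4, p5, p6, p7, p8]
  have hj : {x : T | fj x = x} = ({π (pt 0 0 1 1), π (pt 0 1 0 1), π (pt 1 0 0 1),
      π (pt 1 1 1 1)} : Set T) := by
    ext y
    obtain ⟨x, rfl⟩ : ∃ x, π x = y := QuotientAddGroup.mk_surjective y
    simp only [Set.mem_ofPred_eq, Set.mem_insert_iff, Set.mem_singleton_iff]
    rw [hfj, j_fixed_iff]
  have hk : {x : T | fk x = x} = ({π (pt 0 0 0 1), π (pt 1 0 1 1), π (pt 0 1 1 1),
      π (pt 1 1 0 1)} : Set T) := by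
    ext y
    obtain ⟨x, rfl⟩ : ∃ x, π x = y := QuotientAddGroup.mk_surjective y
    simp only [Set.mem_ofPred_eq, Set.mem_insert_iff, Set.mem_singleton_iff]
    rw [hfk, k_fixed_iff]
  refine ⟨hj, hk, ?_, ?_, ?_⟩
  · rw [hj, Set.ncard_insert_of_notMem, Set.ncard_insert_of_notMem, Set.ncard_pair] <;>
      simp [π_pt_eq_iff]
  · rw [hk, Set.ncard_insert_of_notMem, Set.ncard_insert_of_notMem, Set.ncard_pair] <;>
      simp [π_pt_eq_iff]
  · rintro x (h | h)
    · have h' : x ∈ {x : T | fj x = x} := h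
      rw [hj] at h'
      rcases h' with rfl | rfl | rfl | rfl <;> exact two_tors _ _ _ _
    · have h' : x ∈ {x : T | fk x = x} := h
      rw [hk] at h'
      rcases h' with rfl | rfl | rfl | rfl <;> exact two_tors _ _ _ _
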